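/- Let (X_t) be the lazy random walk Metropolis chain on {0,1}^n for π(x)=θ^{S(x)}(1+θ)^{-n}, S_t = S(X_t), started at S_0 = v. Then for any s > 0 and γ = 1 − (1+θ)/(2n): P_v{S_t ≥ E_v S_t + s} ≤ exp(−(2/9) s² (1 − γ²)) and P_v{S_t ≤ E_v S_t − s} ≤ exp(−(2/9) s² (1 − γ²)). -/

import Mathlib

open Finset
open scoped Classical

/-- number of ones of a vertex of the hypercube -/
def numOnes {n : ℕ} (x : Fin n → Bool) : ℕ :=
  (Finset.univ.filter fun i => x i = true).card

/-- Hamming distance -/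
def ham {n : ℕ} (x y : Fin n → Bool) : ℕ :=
  (Finset.univ.filter fun i => x i ≠ y i).card

/-- Transition kernel of the lazy random walk Metropolis chain for
`π(x) = θ^{S(x)}(1+θ)^{-n}`. -/
noncomputable def metroP (n : ℕ) (θ : ℝ) (x y : Fin n → Bool) : ℝ :=
  if y = x then 1 / 2 + ((n : ℝ) - numOnes x) / (2 * n) * (1 - θ)
  else if ham x y = 1 then
    (if numOnes y < numOnes x then 1 / (2 * n) else θ / (2 * n))
  else 0

/-! Conditionally on `X_t = y`, the variable `S_{t+1}` has mean `γ S(y) + θ/2` and lies within `1`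
of `S(y)`, so by Hoeffding's lemma its fluctuation is sub-Gaussian with variance proxy `1`. The
error `S(y) - E S_t` in the conditional mean is contracted by `γ`, so proxies evolve by
`c ↦ γ² c + 1` and stay below the fixed point `1 / (1 - γ²)`; Chernoff's bound then yields
`exp(-s² (1 - γ²) / 2)`. The paper's `2/9` comes from bounding the centred increment by `3/2` in
absolute value, where Hoeffding's lemma only needs that it ranges over an interval of length `2`.
-/

open MeasureTheory ProbabilityTheory
open scoped NNReal

section SubGaussian

variable {α β : Type*} [MeasurableSpace α] [MeasurableSpace β]

lemma hasSubgaussianMGF_mono {X : α → ℝ} {c d : ℝ≥0} {ν : Measure α}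
    (h : HasSubgaussianMGF X c ν) (hcd : c ≤ d) : HasSubgaussianMGF X d ν where
  integrable_exp_mul := h.integrable_exp_mul
  mgf_le t := (h.mgf_le t).trans (by gcongr)

lemma integral_comp_measure {κ : Kernel β α} {ν : Measure β} {f : α → ℝ}
    (hf : Integrable f (κ ∘ₘ ν)) : ∫ x, f x ∂(κ ∘ₘ ν) = ∫ y, ∫ x, f x ∂κ y ∂ν := by
  rw [Measure.comp_eq_comp_const_apply] at hf ⊢
  exact Kernel.integral_comp hf

lemma integral_exp_mul_le_of_hasSubgaussianMGF_sub {ρ : Measure α} {f : α → ℝ} {a : ℝ} {c : ℝ≥0}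
    (h : HasSubgaussianMGF (fun x => f x - a) c ρ) (t : ℝ) :
    ∫ x, Real.exp (t * f x) ∂ρ ≤ Real.exp (t * a) * Real.exp (c * t ^ 2 / 2) := by
  calc ∫ x, Real.exp (t * f x) ∂ρ = Real.exp (t * a) * mgf (fun x => f x - a) ρ t := by
        rw [mgf, ← integral_const_mul]
        simp_rw [← Real.exp_add, mul_sub, add_sub_cancel]
    _ ≤ _ := by gcongr; exact h.mgf_le t

lemma integrable_exp_mul_of_hasSubgaussianMGF_sub {ρ : Measure α} {f : α → ℝ} {a : ℝ} {c : ℝ≥0}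
    (h : HasSubgaussianMGF (fun x => f x - a) c ρ) (t : ℝ) :
    Integrable (fun x => Real.exp (t * f x)) ρ := by
  refine ((h.integrable_exp_mul t).const_mul (Real.exp (t * a))).congr (.of_forall fun x => ?_)
  simp only [← Real.exp_add, mul_sub, add_sub_cancel]

lemma hasSubgaussianMGF_comp {κ : Kernel β α} {ν : Measure β} {f : α → ℝ} {g : β → ℝ}
    {c d : ℝ≥0} (hf : Measurable f) (hg : HasSubgaussianMGF g c ν)
    (hκ : ∀ y, HasSubgaussianMGF (fun x => f x - g y) d (κ y)) :
    HasSubgaussianMGF f (c + d) (κ ∘ₘ ν) := by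
  have hle (t : ℝ) (y : β) :
      ∫ x, Real.exp (t * f x) ∂κ y ≤ Real.exp (t * g y) * Real.exp (d * t ^ 2 / 2) :=
    integral_exp_mul_le_of_hasSubgaussianMGF_sub (hκ y) t
  have hexp (t : ℝ) : StronglyMeasurable fun x => Real.exp (t * f x) := by fun_prop
  have hdom (t : ℝ) : Integrable (fun y => Real.exp (t * g y) * Real.exp (d * t ^ 2 / 2)) ν :=
    (hg.integrable_exp_mul t).mul_const _
  have hinner (t : ℝ) : Integrable (fun y => ∫ x, Real.exp (t * f x) ∂κ y) ν := by
    refine (hdom t).mono' (hexp t).integral_kernel.aestronglyMeasurable (.of_forall fun y => ?_)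
    rw [Real.norm_of_nonneg (by positivity)]
    exact hle t y
  have hint (t : ℝ) : Integrable (fun x => Real.exp (t * f x)) (κ ∘ₘ ν) := by
    rw [Measure.integrable_comp_iff (hexp t).aestronglyMeasurable]
    refine ⟨.of_forall fun y => integrable_exp_mul_of_hasSubgaussianMGF_sub (hκ y) t, ?_⟩
    simpa only [Real.norm_eq_abs, Real.abs_exp] using hinner t
  refine ⟨hint, fun t => ?_⟩
  calc mgf f (κ ∘ₘ ν) t = ∫ y, ∫ x, Real.exp (t * f x) ∂κ y ∂ν := integral_comp_measure (hint t)
    _ ≤ ∫ y, Real.exp (t * g y) * Real.exp (d * t ^ 2 / 2) ∂ν :=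
        integral_mono (hinner t) (hdom t) (hle t)
    _ = mgf g ν t * Real.exp (d * t ^ 2 / 2) := integral_mul_const _ _
    _ ≤ Real.exp (c * t ^ 2 / 2) * Real.exp (d * t ^ 2 / 2) := by gcongr; exact hg.mgf_le t
    _ = Real.exp ((c + d : ℝ≥0) * t ^ 2 / 2) := by
        rw [← Real.exp_add, NNReal.coe_add]
        ring_nf

lemma hasSubgaussianMGF_sub_integral_comp {κ : Kernel α α} [IsMarkovKernel κ] {ν : Measure α}
    [IsProbabilityMeasure ν] {f : α → ℝ} {γ b : ℝ} {c d : ℝ≥0} (hf : Measurable f)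
    (hdrift : ∀ y, (κ y)[f] = γ * f y + b)
    (hκ : ∀ y, HasSubgaussianMGF (fun x => f x - (κ y)[f]) d (κ y))
    (hν : HasSubgaussianMGF (fun x => f x - ν[f]) c ν) :
    HasSubgaussianMGF (fun x => f x - (κ ∘ₘ ν)[f]) (‖γ‖₊ ^ 2 * c + d) (κ ∘ₘ ν) := by
  have hfν : Integrable f ν :=
    (hν.integrable.add (integrable_const ν[f])).congr (.of_forall fun _ => sub_add_cancel _ _)
  have hγ : HasSubgaussianMGF (fun y => γ * (f y - ν[f])) (‖γ‖₊ ^ 2 * c) ν := by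
    have hsq : ‖γ‖₊ ^ 2 = ⟨γ ^ 2, sq_nonneg γ⟩ := NNReal.eq (sq_abs γ)
    rw [hsq]
    exact hν.const_mul γ
  have hcomp : HasSubgaussianMGF (fun x => f x - (γ * ν[f] + b)) (‖γ‖₊ ^ 2 * c + d) (κ ∘ₘ ν) := by
    refine hasSubgaussianMGF_comp (hf.sub_const _) hγ fun y => ?_
    convert hκ y using 2 with x
    rw [hdrift]
    ring
  have hfκ : Integrable f (κ ∘ₘ ν) :=
    (hcomp.integrable.add (integrable_const (γ * ν[f] + b))).congr
      (.of_forall fun _ => sub_add_cancel _ _)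
  have hmean : (κ ∘ₘ ν)[f] = γ * ν[f] + b := by
    rw [integral_comp_measure hfκ]
    simp_rw [hdrift]
    rw [integral_add (hfν.const_mul γ) (integrable_const b), integral_const_mul]
    simp
  rwa [hmean]

lemma hasSubgaussianMGF_sub_integral_of_step {κ : Kernel α α} [IsMarkovKernel κ]
    {ν : ℕ → Measure α} [∀ t, IsProbabilityMeasure (ν t)] {f : α → ℝ} {γ b : ℝ} {c d : ℝ≥0}
    (hf : Measurable f) (hdrift : ∀ y, (κ y)[f] = γ * f y + b)
    (hκ : ∀ y, HasSubgaussianMGF (fun x => f x - (κ y)[f]) d (κ y))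
    (h0 : HasSubgaussianMGF (fun x => f x - (ν 0)[f]) c (ν 0))
    (hν : ∀ t, ν (t + 1) = κ ∘ₘ ν t) (hc : ‖γ‖₊ ^ 2 * c + d ≤ c) (t : ℕ) :
    HasSubgaussianMGF (fun x => f x - (ν t)[f]) c (ν t) := by
  induction t with
  | zero => exact h0
  | succ t ih =>
    rw [hν]
    exact hasSubgaussianMGF_mono (hasSubgaussianMGF_sub_integral_comp hf hdrift hκ ih) hc

end SubGaussian

section WeightedMeasure

variable {α : Type*} [MeasurableSpace α] [MeasurableSingletonClass α]

/-- The measure on a finite type with point masses `p a`. Negative weights count as zero. -/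
noncomputable def weightedMeasure (p : α → ℝ) : Measure α :=
  Measure.count.withDensity fun a => ENNReal.ofReal (p a)

lemma weightedMeasure_singleton (p : α → ℝ) (a : α) :
    weightedMeasure p {a} = ENNReal.ofReal (p a) := by
  rw [weightedMeasure, withDensity_apply _ (measurableSet_singleton a), lintegral_singleton,
    Measure.count_singleton, mul_one]

lemma ae_weightedMeasure_iff [Countable α] {p : α → ℝ} {q : α → Prop} (hp : ∀ a, 0 ≤ p a) :
    (∀ᵐ a ∂(weightedMeasure p), q a) ↔ ∀ a, p a ≠ 0 → q a := by
  simp only [ae_iff_of_countable, weightedMeasure_singleton, ne_eq, ENNReal.ofReal_eq_zero,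
    (hp _).ge_iff_eq']

instance isFiniteMeasure_weightedMeasure [Finite α] (p : α → ℝ) :
    IsFiniteMeasure (weightedMeasure p) := by
  have := Fintype.ofFinite α
  refine isFiniteMeasure_withDensity ?_
  rw [lintegral_fintype]
  simp [ENNReal.sum_eq_top]

lemma weightedMeasure_real_coe [Finite α] {p : α → ℝ} (hp : ∀ a, 0 ≤ p a) (s : Finset α) :
    (weightedMeasure p).real s = ∑ a ∈ s, p a := by
  simp_rw [← sum_measureReal_singleton, measureReal_def, weightedMeasure_singleton,
    ENNReal.toReal_ofReal (hp _)]

variable [Fintype α]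

lemma integral_weightedMeasure {p : α → ℝ} (hp : ∀ a, 0 ≤ p a) (f : α → ℝ) :
    ∫ a, f a ∂(weightedMeasure p) = ∑ a, p a * f a := by
  simp_rw [integral_fintype .of_finite, measureReal_def, weightedMeasure_singleton,
    ENNReal.toReal_ofReal (hp _), smul_eq_mul]

lemma isProbabilityMeasure_weightedMeasure {p : α → ℝ} (hp : p ∈ stdSimplex ℝ α) :
    IsProbabilityMeasure (weightedMeasure p) := by
  rw [isProbabilityMeasure_iff_real, ← Finset.coe_univ, weightedMeasure_real_coe hp.1, hp.2]

lemma hasSubgaussianMGF_weightedMeasure {p f : α → ℝ} {a K : ℝ} (hp : p ∈ stdSimplex ℝ α)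
    (hf : ∀ x, p x ≠ 0 → |f x - a| ≤ K) :
    HasSubgaussianMGF (fun x => f x - (weightedMeasure p)[f]) (‖K‖₊ ^ 2) (weightedMeasure p) := by
  have := isProbabilityMeasure_weightedMeasure hp
  have hIcc : ∀ᵐ x ∂(weightedMeasure p), f x ∈ Set.Icc (a - K) (a + K) := by
    refine (ae_weightedMeasure_iff hp.1).2 fun x hx => ?_
    rw [← Set.mem_Icc_iff_abs_le, abs_sub_comm]
    exact hf x hx
  convert hasSubgaussianMGF_of_mem_Icc AEMeasurable.of_discrete hIcc
  rw [add_sub_sub_cancel, ← two_mul, nnnorm_mul, Real.nnnorm_two,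
    mul_div_cancel_left₀ _ two_ne_zero]

/-- The kernel of a Markov chain on a finite type with transition matrix `P`, whose rows are indexed
by the current state. -/
noncomputable def weightedKernel (P : α → α → ℝ) : Kernel α α :=
  Kernel.ofFunOfCountable fun y => weightedMeasure (P y)

lemma weightedKernel_apply (P : α → α → ℝ) (y : α) :
    weightedKernel P y = weightedMeasure (P y) := rfl

lemma isMarkovKernel_weightedKernel {P : α → α → ℝ} (hP : ∀ y, P y ∈ stdSimplex ℝ α) :
    IsMarkovKernel (weightedKernel P) :=
  ⟨fun y => isProbabilityMeasure_weightedMeasure (hP y)⟩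

lemma weightedKernel_comp_weightedMeasure {P : α → α → ℝ} {p : α → ℝ}
    (hP : ∀ y x, 0 ≤ P y x) (hp : ∀ y, 0 ≤ p y) :
    weightedKernel P ∘ₘ weightedMeasure p = weightedMeasure fun x => ∑ y, p y * P y x := by
  refine Measure.ext_iff_singleton.2 fun x => ?_
  rw [Measure.bind_apply (measurableSet_singleton x) (weightedKernel P).measurable.aemeasurable,
    lintegral_fintype, weightedMeasure_singleton,
    ENNReal.ofReal_sum_of_nonneg fun y _ => mul_nonneg (hp y) (hP y x)]
  refine Finset.sum_congr rfl fun y _ => ?_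
  rw [weightedKernel_apply, weightedMeasure_singleton, weightedMeasure_singleton, mul_comm,
    ENNReal.ofReal_mul (hp y)]

end WeightedMeasure

/-- `μ t` is the law at time `t` of the Markov chain on a finite type with transition matrix `P`
(rows indexed by the current state), started at `x₀`. -/
structure IsMarkovLaw {α : Type*} [Fintype α] (P : α → α → ℝ) (x₀ : α) (μ : ℕ → α → ℝ) :
    Prop where
  row_mem : ∀ y, P y ∈ stdSimplex ℝ α
  zero : μ 0 = Pi.single x₀ 1
  succ : ∀ t x, μ (t + 1) x = ∑ y, μ t y * P y x

namespace IsMarkovLaw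

variable {α : Type*} [Fintype α] {P : α → α → ℝ} {x₀ : α} {μ : ℕ → α → ℝ}
  {f : α → ℝ} {γ b K : ℝ}

lemma mem_stdSimplex (h : IsMarkovLaw P x₀ μ) (t : ℕ) : μ t ∈ stdSimplex ℝ α := by
  induction t with
  | zero => exact h.zero ▸ single_mem_stdSimplex ℝ x₀
  | succ t ih =>
    refine ⟨fun x => ?_, ?_⟩
    · rw [h.succ]
      exact Finset.sum_nonneg fun y _ => mul_nonneg (ih.1 y) ((h.row_mem y).1 x)
    · simp_rw [h.succ]
      rw [Finset.sum_comm]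
      simp_rw [← Finset.mul_sum, (h.row_mem _).2, mul_one, ih.2]

lemma weightedMeasure_succ [MeasurableSpace α] [MeasurableSingletonClass α]
    (h : IsMarkovLaw P x₀ μ) (t : ℕ) :
    weightedMeasure (μ (t + 1)) = weightedKernel P ∘ₘ weightedMeasure (μ t) := by
  rw [weightedKernel_comp_weightedMeasure (fun y => (h.row_mem y).1) (h.mem_stdSimplex t).1,
    funext (h.succ t)]

lemma hasSubgaussianMGF_zero [MeasurableSpace α] [MeasurableSingletonClass α]
    (h : IsMarkovLaw P x₀ μ) (f : α → ℝ) :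
    HasSubgaussianMGF (fun x => f x - (weightedMeasure (μ 0))[f]) 0 (weightedMeasure (μ 0)) := by
  have h0 := h.mem_stdSimplex 0
  have := isProbabilityMeasure_weightedMeasure h0
  refine HasSubgaussianMGF.fun_zero.congr ((ae_weightedMeasure_iff h0.1).2 fun x hx => ?_)
  obtain rfl : x = x₀ := by simpa [h.zero, Pi.single_apply] using hx
  rw [integral_weightedMeasure h0.1, h.zero]
  simp [Pi.single_apply]

lemma hasSubgaussianMGF [MeasurableSpace α] [MeasurableSingletonClass α]
    (h : IsMarkovLaw P x₀ μ) (hdrift : ∀ y, ∑ x, P y x * f x = γ * f y + b)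
    (hincr : ∀ y x, P y x ≠ 0 → |f x - f y| ≤ K) (hγ : |γ| < 1) (t : ℕ) :
    HasSubgaussianMGF (fun x => f x - ∑ x, μ t x * f x) (K ^ 2 / (1 - γ ^ 2)).toNNReal
      (weightedMeasure (μ t)) := by
  have := isMarkovKernel_weightedKernel h.row_mem
  have (t : ℕ) := isProbabilityMeasure_weightedMeasure (h.mem_stdSimplex t)
  have hγ2 : 0 < 1 - γ ^ 2 := sub_pos.2 ((sq_lt_one_iff_abs_lt_one γ).2 hγ)
  have hfix : ‖γ‖₊ ^ 2 * (K ^ 2 / (1 - γ ^ 2)).toNNReal + ‖K‖₊ ^ 2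
      = (K ^ 2 / (1 - γ ^ 2)).toNNReal := by
    refine NNReal.eq ?_
    push_cast
    rw [Real.coe_toNNReal _ (by positivity), Real.norm_eq_abs, Real.norm_eq_abs, sq_abs, sq_abs]
    field_simp
    ring
  rw [← integral_weightedMeasure (h.mem_stdSimplex t).1]
  refine hasSubgaussianMGF_sub_integral_of_step (κ := weightedKernel P) (γ := γ) (b := b)
    (ν := fun t => weightedMeasure (μ t)) .of_discrete (fun y => ?_)
    (fun y => hasSubgaussianMGF_weightedMeasure (h.row_mem y) (hincr y))
    (hasSubgaussianMGF_mono (h.hasSubgaussianMGF_zero f) zero_le) h.weightedMeasure_succ hfix.le t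
  rw [weightedKernel_apply, integral_weightedMeasure (h.row_mem y).1, hdrift]

theorem upper_tail_le (h : IsMarkovLaw P x₀ μ) (hdrift : ∀ y, ∑ x, P y x * f x = γ * f y + b)
    (hincr : ∀ y x, P y x ≠ 0 → |f x - f y| ≤ K) (hγ : |γ| < 1) (t : ℕ) {s : ℝ} (hs : 0 ≤ s) :
    ∑ x with ∑ y, μ t y * f y + s ≤ f x, μ t x
      ≤ Real.exp (-(s ^ 2 * (1 - γ ^ 2) / (2 * K ^ 2))) := by
  let : MeasurableSpace α := ⊤
  have hγ2 : 0 < 1 - γ ^ 2 := sub_pos.2 ((sq_lt_one_iff_abs_lt_one γ).2 hγ)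
  have htail := (h.hasSubgaussianMGF hdrift hincr hγ t).measure_ge_le hs
  rw [Real.coe_toNNReal _ (by positivity)] at htail
  rw [← weightedMeasure_real_coe (h.mem_stdSimplex t).1]
  convert htail using 2
  · ext x
    simp only [coe_filter, mem_univ, true_and, Set.mem_ofPred_eq, le_sub_iff_add_le']
  · field_simp

theorem lower_tail_le (h : IsMarkovLaw P x₀ μ) (hdrift : ∀ y, ∑ x, P y x * f x = γ * f y + b)
    (hincr : ∀ y x, P y x ≠ 0 → |f x - f y| ≤ K) (hγ : |γ| < 1) (t : ℕ) {s : ℝ} (hs : 0 ≤ s) :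
    ∑ x with f x ≤ ∑ y, μ t y * f y - s, μ t x
      ≤ Real.exp (-(s ^ 2 * (1 - γ ^ 2) / (2 * K ^ 2))) := by
  have hdrift' (y : α) : ∑ x, P y x * -f x = γ * -f y + -b := by
    simp only [mul_neg, Finset.sum_neg_distrib, hdrift]
    ring
  have hincr' (y x : α) (hyx : P y x ≠ 0) : |-f x - -f y| ≤ K := by
    rw [neg_sub_neg, abs_sub_comm]
    exact hincr y x hyx
  have hiff (x : α) : ∑ y, μ t y * -f y + s ≤ -f x ↔ f x ≤ ∑ y, μ t y * f y - s := by
    simp only [mul_neg, Finset.sum_neg_distrib]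
    constructor <;> intro hx <;> linarith
  simpa only [hiff] using h.upper_tail_le hdrift' hincr' hγ t hs

end IsMarkovLaw

section Metropolis

variable {n : ℕ} {θ : ℝ}

/-- The vertex `y` of the hypercube with its `i`-th coordinate flipped, that is, the `i`-th
neighbour of `y`. -/
def flipAt (y : Fin n → Bool) (i : Fin n) : Fin n → Bool :=
  Function.update y i (!y i)

lemma flipAt_apply_self (y : Fin n → Bool) (i : Fin n) : flipAt y i i = !y i :=
  Function.update_self ..

lemma flipAt_apply_of_ne (y : Fin n → Bool) {i j : Fin n} (h : j ≠ i) : flipAt y i j = y j :=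
  Function.update_of_ne h ..

lemma flipAt_apply_ne_iff {y : Fin n → Bool} {i j : Fin n} : y j ≠ flipAt y i j ↔ j = i := by
  rcases eq_or_ne j i with rfl | h
  · simp [flipAt_apply_self]
  · simp [flipAt_apply_of_ne y h, h]

lemma flipAt_ne (y : Fin n → Bool) (i : Fin n) : flipAt y i ≠ y :=
  fun h => flipAt_apply_ne_iff.2 rfl (congrFun h i).symm

lemma flipAt_injective (y : Fin n → Bool) : Function.Injective (flipAt y) := fun i j h =>
  flipAt_apply_ne_iff.1 (h ▸ flipAt_apply_ne_iff.2 rfl : y i ≠ flipAt y j i)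

lemma ham_eq_one_iff {y x : Fin n → Bool} : ham y x = 1 ↔ ∃ i, x = flipAt y i := by
  rw [ham, Finset.card_eq_one]
  refine exists_congr fun i => ?_
  calc ({j | y j ≠ x j} : Finset (Fin n)) = {i} ↔ ∀ j, y j ≠ x j ↔ y j ≠ flipAt y i j := by
        simp only [Finset.ext_iff, mem_filter_univ, mem_singleton, flipAt_apply_ne_iff]
    _ ↔ x = flipAt y i := by
        simp only [funext_iff]
        refine forall_congr' fun j => ?_
        cases y j <;> cases x j <;> cases flipAt y i j <;> decide

lemma numOnes_le (x : Fin n → Bool) : numOnes x ≤ n :=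
  (Finset.card_le_univ _).trans_eq (Fintype.card_fin n)

lemma sum_ite_eq_mul_numOnes (y : Fin n → Bool) (a b : ℝ) :
    ∑ i, (if y i = true then a else b) = a * numOnes y + b * (n - numOnes y) := by
  have hzeros : (({i | ¬y i = true} : Finset (Fin n)).card : ℝ) = n - numOnes y := by
    rw [eq_sub_iff_add_eq', numOnes, ← Nat.cast_add, Finset.card_filter_add_card_filter_not,
      Finset.card_univ, Fintype.card_fin]
  rw [Finset.sum_ite, Finset.sum_const, Finset.sum_const, nsmul_eq_mul, nsmul_eq_mul, hzeros,
    numOnes, mul_comm a, mul_comm b]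

lemma numOnes_flipAt (y : Fin n → Bool) (i : Fin n) :
    (numOnes (flipAt y i) : ℝ) = numOnes y + if y i = true then -1 else 1 := by
  have hcast (x : Fin n → Bool) : (numOnes x : ℝ) = ∑ j, if x j = true then (1 : ℝ) else 0 := by
    rw [sum_ite_eq_mul_numOnes, one_mul, zero_mul, add_zero]
  rw [← sub_eq_iff_eq_add', hcast, hcast, ← Finset.sum_sub_distrib,
    Finset.sum_eq_single_of_mem i (mem_univ i) fun j _ hj => by
      rw [flipAt_apply_of_ne y hj, sub_self], flipAt_apply_self]
  cases y i <;> simp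

lemma numOnes_flipAt_lt_iff {y : Fin n → Bool} {i : Fin n} :
    numOnes (flipAt y i) < numOnes y ↔ y i = true := by
  rw [← Nat.cast_lt (α := ℝ), numOnes_flipAt]
  split_ifs with h <;> simp [h]

/-- The probability that the Metropolis chain at `y` flips the coordinate `i`. -/
noncomputable def flipProb (θ : ℝ) (y : Fin n → Bool) (i : Fin n) : ℝ :=
  if y i = true then 1 / (2 * n) else θ / (2 * n)

/-- The probability that the Metropolis chain at `y` stays put. -/
noncomputable def holdProb (θ : ℝ) (y : Fin n → Bool) : ℝ :=
  1 / 2 + ((n : ℝ) - numOnes y) / (2 * n) * (1 - θ)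

lemma metroP_eq_hold_add_sum_flip (θ : ℝ) (y x : Fin n → Bool) :
    metroP n θ y x =
      (if x = y then holdProb θ y else 0) + ∑ i, if x = flipAt y i then flipProb θ y i else 0 := by
  unfold metroP
  by_cases hxy : x = y
  · subst hxy
    simp [holdProb, (flipAt_ne x _).symm]
  by_cases hham : ham y x = 1
  · obtain ⟨i, rfl⟩ := ham_eq_one_iff.1 hham
    simp [hham, hxy, flipProb, numOnes_flipAt_lt_iff, (flipAt_injective y).eq_iff]
  · have hne (i : Fin n) : x ≠ flipAt y i := fun hi => hham (ham_eq_one_iff.2 ⟨i, hi⟩)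
    simp [hham, hxy, hne]

lemma sum_metroP_mul (θ : ℝ) (y : Fin n → Bool) (g : (Fin n → Bool) → ℝ) :
    ∑ x, metroP n θ y x * g x =
      holdProb θ y * g y + ∑ i, flipProb θ y i * g (flipAt y i) := by
  simp only [metroP_eq_hold_add_sum_flip, add_mul, Finset.sum_add_distrib, Finset.sum_mul]
  rw [Finset.sum_comm]
  simp only [ite_mul, zero_mul, Finset.sum_ite_eq', Finset.mem_univ, if_true]

lemma sum_metroP (hn : 0 < n) (θ : ℝ) (y : Fin n → Bool) : ∑ x, metroP n θ y x = 1 := by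
  have h := sum_metroP_mul θ y fun _ => 1
  simp only [mul_one, flipProb, sum_ite_eq_mul_numOnes, holdProb] at h
  rw [h]
  field_simp
  ring

lemma sum_metroP_mul_numOnes (hn : 0 < n) (θ : ℝ) (y : Fin n → Bool) :
    ∑ x, metroP n θ y x * (numOnes x : ℝ) = (1 - (1 + θ) / (2 * n)) * numOnes y + θ / 2 := by
  have hflip (i : Fin n) : flipProb θ y i * (numOnes (flipAt y i) : ℝ) =
      if y i = true then 1 / (2 * (n : ℝ)) * (numOnes y - 1)
        else θ / (2 * n) * (numOnes y + 1) := by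
    rw [numOnes_flipAt, flipProb]
    split_ifs <;> ring
  simp only [sum_metroP_mul, hflip, sum_ite_eq_mul_numOnes, holdProb]
  field_simp
  ring

lemma holdProb_nonneg (hθ : θ ≤ 2) (y : Fin n → Bool) : 0 ≤ holdProb θ y := by
  have hle : (numOnes y : ℝ) ≤ n := by exact_mod_cast numOnes_le y
  have hr0 : 0 ≤ ((n : ℝ) - numOnes y) / (2 * n) := div_nonneg (sub_nonneg.2 hle) (by positivity)
  have hr1 : ((n : ℝ) - numOnes y) / (2 * n) ≤ 1 / 2 :=
    div_le_of_le_mul₀ (by positivity) (by norm_num) (by linarith [(numOnes y).cast_nonneg (α := ℝ)])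
  unfold holdProb
  nlinarith

lemma metroP_nonneg (hθ0 : 0 ≤ θ) (hθ2 : θ ≤ 2) (y x : Fin n → Bool) : 0 ≤ metroP n θ y x := by
  have hhold := holdProb_nonneg hθ2 y
  unfold holdProb at hhold
  unfold metroP
  split_ifs <;> positivity

lemma abs_numOnes_sub_le_one_of_metroP_ne_zero {y x : Fin n → Bool} (h : metroP n θ y x ≠ 0) :
    |(numOnes x : ℝ) - numOnes y| ≤ 1 := by
  by_cases hxy : x = y
  · simp [hxy]
  by_cases hham : ham y x = 1
  · obtain ⟨i, rfl⟩ := ham_eq_one_iff.1 hham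
    rw [numOnes_flipAt]
    split_ifs <;> simp
  · simp [metroP, hxy, hham] at h

lemma abs_one_sub_div_lt_one (hn : 0 < n) (hθ0 : 0 ≤ θ) (hθ2 : θ ≤ 2) :
    |1 - (1 + θ) / (2 * n)| < 1 := by
  have hn1 : (1 : ℝ) ≤ n := by exact_mod_cast hn
  have hpos : 0 < (1 + θ) / (2 * n) := by positivity
  have hlt : (1 + θ) / (2 * n) < 2 := (div_lt_iff₀ (by positivity)).2 (by linarith)
  rw [abs_lt]
  constructor <;> linarith

lemma exp_neg_mul_sq_mul_le {c d γ : ℝ} (hcd : c ≤ d) (hγ : |γ| ≤ 1) (s : ℝ) :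
    Real.exp (-d * s ^ 2 * (1 - γ ^ 2)) ≤ Real.exp (-c * s ^ 2 * (1 - γ ^ 2)) := by
  have hγ2 : 0 ≤ 1 - γ ^ 2 := sub_nonneg.2 ((sq_le_one_iff_abs_le_one γ).2 hγ)
  gcongr

lemma isMarkovLaw_metroP (hn : 0 < n) (hθ0 : 0 ≤ θ) (hθ2 : θ ≤ 2) {x0 : Fin n → Bool}
    {μ : ℕ → (Fin n → Bool) → ℝ} (hμ0 : μ 0 = fun x => if x = x0 then 1 else 0)
    (hμ : ∀ t x, μ (t + 1) x = ∑ y, μ t y * metroP n θ y x) : IsMarkovLaw (metroP n θ) x0 μ where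
  row_mem y := ⟨metroP_nonneg hθ0 hθ2 y, sum_metroP hn θ y⟩
  zero := by
    ext x
    simp [hμ0, Pi.single_apply]
  succ := hμ

end Metropolis

theorem stmt11_general (n : ℕ) (hn : 0 < n) (θ : ℝ) (hθ0 : 0 ≤ θ) (hθ2 : θ ≤ 2)
    (x0 : Fin n → Bool)
    (μ : ℕ → (Fin n → Bool) → ℝ)
    (hμ0 : μ 0 = fun x => if x = x0 then 1 else 0)
    (hμ : ∀ t x, μ (t + 1) x = ∑ y, μ t y * metroP n θ y x)
    (t : ℕ) (s : ℝ) (hs : 0 ≤ s) :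
    let γ : ℝ := 1 - (1 + θ) / (2 * n)
    let Ev : ℝ := ∑ x, μ t x * (numOnes x : ℝ)
    (∑ x ∈ Finset.univ.filter (fun x : Fin n → Bool => Ev + s ≤ (numOnes x : ℝ)), μ t x)
        ≤ Real.exp (-(1 / 2) * s ^ 2 * (1 - γ ^ 2)) ∧
    (∑ x ∈ Finset.univ.filter (fun x : Fin n → Bool => (numOnes x : ℝ) ≤ Ev - s), μ t x)
        ≤ Real.exp (-(1 / 2) * s ^ 2 * (1 - γ ^ 2)) := by
  intro γ Ev
  have hexp : -(1 / 2) * s ^ 2 * (1 - γ ^ 2) = -(s ^ 2 * (1 - γ ^ 2) / (2 * 1 ^ 2)) := by ring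
  have hlaw := isMarkovLaw_metroP hn hθ0 hθ2 hμ0 hμ
  have hdrift := sum_metroP_mul_numOnes hn θ
  have hincr (y x : Fin n → Bool) (h : metroP n θ y x ≠ 0) :=
    abs_numOnes_sub_le_one_of_metroP_ne_zero h
  have hγ := abs_one_sub_div_lt_one hn hθ0 hθ2
  rw [hexp]
  exact ⟨hlaw.upper_tail_le hdrift hincr hγ t hs, hlaw.lower_tail_le hdrift hincr hγ t hs⟩

/-- Concentration of `S_t = S(X_t)` for the lazy Metropolis chain started at a
state with `S = v`: both tails at distance `s` from `E_v S_t` have probability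
at most `exp(−(2/9) s² (1 − γ²))`, `γ = 1 − (1+θ)/(2n)`. -/
theorem stmt11 (n : ℕ) (hn : 0 < n) (θ : ℝ) (hθ0 : 0 < θ) (hθ1 : θ ≤ 1)
    (x0 : Fin n → Bool)
    (μ : ℕ → (Fin n → Bool) → ℝ)
    (hμ0 : μ 0 = fun x => if x = x0 then 1 else 0)
    (hμ : ∀ t x, μ (t + 1) x = ∑ y, μ t y * metroP n θ y x)
    (t : ℕ) (s : ℝ) (hs : 0 < s) :
    let γ : ℝ := 1 - (1 + θ) / (2 * n)
    let Ev : ℝ := ∑ x, μ t x * (numOnes x : ℝ)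
    (∑ x ∈ Finset.univ.filter (fun x : Fin n → Bool => Ev + s ≤ (numOnes x : ℝ)), μ t x)
        ≤ Real.exp (-(2 / 9) * s ^ 2 * (1 - γ ^ 2)) ∧
    (∑ x ∈ Finset.univ.filter (fun x : Fin n → Bool => (numOnes x : ℝ) ≤ Ev - s), μ t x)
        ≤ Real.exp (-(2 / 9) * s ^ 2 * (1 - γ ^ 2)) := by
  intro γ Ev
  have hθ2 : θ ≤ 2 := hθ1.trans one_le_two
  have hexp := exp_neg_mul_sq_mul_le (by norm_num : (2 / 9 : ℝ) ≤ 1 / 2)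
    (abs_one_sub_div_lt_one hn hθ0.le hθ2).le s
  exact (stmt11_general n hn θ hθ0.le hθ2 x0 μ hμ0 hμ t s hs.le).imp hexp.trans' hexp.trans'
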